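/- Let u be quasi-definite with SMOP (P_n) and recurrence coefficients (a_n, b_n), and let u^{(1)} be a linear functional whose SMOP is the sequence (P^{(1)}_n) of associated polynomials of the first kind. Then u^{(1)} = −(u^{(1)}_0·u_0/a_1)·x²·u^{-1}; that is, for every n ≥ 0 the moments satisfy u^{(1)}_n = −(u^{(1)}_0·u_0/a_1)·(u^{-1})_{n+2}, where (u^{-1})_k are the moments of the inverse functional of u. -/

import Mathlib

open Polynomial

noncomputable section

/-- Apply a linear functional (identified with its moment sequence) to a polynomial:
`⟨u, p⟩ = Σ_k c_k u_k` for `p = Σ_k c_k x^k`. -/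
def fapply (u : ℕ → ℂ) (p : Polynomial ℂ) : ℂ := p.sum fun k ck => ck * u k

/-- `P` is the sequence of monic orthogonal polynomials (SMOP) of the functional `u`. -/
def IsSMOP (u : ℕ → ℂ) (P : ℕ → Polynomial ℂ) : Prop :=
  (∀ n, (P n).Monic) ∧ (∀ n, (P n).natDegree = n) ∧
    (∀ n m, n ≠ m → fapply u (P n * P m) = 0) ∧ (∀ n, fapply u (P n * P n) ≠ 0)

/-- A functional is quasi-definite iff it admits a SMOP. -/
def IsQuasiDefinite (u : ℕ → ℂ) : Prop := ∃ P, IsSMOP u P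

/-- Three term recurrence relation `x P_n = P_{n+1} + b_n P_n + a_n P_{n-1}`,
with `P_{-1} = 0`, `P_0 = 1`. -/
def HasTTRR (P : ℕ → Polynomial ℂ) (a b : ℕ → ℂ) : Prop :=
  P 0 = 1 ∧ X * P 0 = P 1 + C (b 0) * P 0 ∧
    ∀ n, 1 ≤ n → X * P n = P (n + 1) + C (b n) * P n + C (a n) * P (n - 1)

/-- Wronskian `W(p,q)(x) = p(x) q'(x) - p'(x) q(x)`. -/
def Wr (p q : Polynomial ℂ) (x : ℂ) : ℂ :=
  p.eval x * (derivative q).eval x - (derivative p).eval x * q.eval x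

/-- The monic Jacobi matrix with diagonal `b`, superdiagonal `1` and subdiagonal
entries `J_{n+1,n} = a_{n+1}`. -/
def jacobi (a b : ℕ → ℂ) (i j : ℕ) : ℂ :=
  if i = j then b i else if j = i + 1 then 1 else if i = j + 1 then a i else 0

/-- Entrywise product of semi-infinite (banded) matrices; the sum has finite support. -/
def mprod (A B : ℕ → ℕ → ℂ) (i j : ℕ) : ℂ := ∑' k, A i k * B k j

/-- `w` is the moment sequence of the inverse functional `u⁻¹`:
the convolution of the moments of `u` and `w` is `(1,0,0,…)`. -/
def IsInverseMoments (u w : ℕ → ℂ) : Prop :=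
  ∀ n, ∑ k ∈ Finset.range (n + 1), u k * w (n - k) = if n = 0 then 1 else 0

/-- Apply a functional `u` to the second (outer) variable `y` of a bivariate polynomial
`D = Σ_k q_k(x) y^k`, giving `Σ_k u_k q_k(x)`. -/
def fapplyY (u : ℕ → ℂ) (D : Polynomial (Polynomial ℂ)) : Polynomial ℂ :=
  D.sum fun k q => u k • q

/-!
Write `S p = ⟨u_y, (p(x) - p(y)) / (x - y)⟩`. From `S (x p) = x S p + ⟨u, p⟩` the polynomials
`S P_{n+1}` satisfy the shifted recurrence, so `S P_{n+1} = u_0 P^{(1)}_n`. On the other hand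
`⟨x² u⁻¹, S p⟩ = -((u⁻¹)_0 ⟨u, x p⟩ + (u⁻¹)_1 ⟨u, p⟩)`, which is the convolution identity for
`u⁻¹` when `p` is a power of `x`. Hence `x² u⁻¹` annihilates `P^{(1)}_n` for `n ≥ 1`, as `u^{(1)}`
does, and so the two functionals are proportional.
-/

open Finset (range sum_range_succ)

section

variable {R : Type*} [CommRing R]

/-- The linear functional on `R[X]` with moment sequence `u`; over `ℂ` it is `fapply u`, bundled
as a linear map. -/
def momentFunctional (u : ℕ → R) : R[X] →ₗ[R] R :=
  lsum fun k => LinearMap.mulRight R (u k)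

theorem momentFunctional_X_pow (u : ℕ → R) (n : ℕ) : momentFunctional u (X ^ n) = u n := by
  simp [momentFunctional, ← monomial_one_right_eq_X_pow, sum_monomial_index]

theorem momentFunctional_one (u : ℕ → R) : momentFunctional u 1 = u 0 := by
  simpa only [pow_zero] using momentFunctional_X_pow u 0

/-- The linear map `p ↦ ⟨u_y, (p(x) - p(y)) / (x - y)⟩`, which produces the associated polynomials
of the first kind. It is encoded by its values on powers, through
`(x ^ n - y ^ n) / (x - y) = ∑ k < n, y ^ k x ^ (n - 1 - k)`. -/
def differenceQuotient (u : ℕ → R) : R[X] →ₗ[R] R[X] :=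
  lsum fun n => LinearMap.toSpanSingleton R R[X] (∑ k ∈ range n, u k • X ^ (n - 1 - k))

theorem differenceQuotient_X_pow (u : ℕ → R) (n : ℕ) :
    differenceQuotient u (X ^ n) = ∑ k ∈ range n, u k • X ^ (n - 1 - k) := by
  simp [differenceQuotient, ← monomial_one_right_eq_X_pow, sum_monomial_index]

theorem differenceQuotient_one (u : ℕ → R) : differenceQuotient u 1 = 0 := by
  simpa using differenceQuotient_X_pow u 0

theorem differenceQuotient_X_pow_succ (u : ℕ → R) (n : ℕ) :
    differenceQuotient u (X ^ (n + 1)) = X * differenceQuotient u (X ^ n) + C (u n) := by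
  have shift : ∑ k ∈ range n, u k • (X : R[X]) ^ (n - k) =
      X * ∑ k ∈ range n, u k • X ^ (n - 1 - k) := by
    rw [Finset.mul_sum]
    refine Finset.sum_congr rfl fun k hk => ?_
    rw [mul_smul_comm, ← pow_succ', Nat.sub_right_comm,
      Nat.sub_add_cancel (Nat.sub_pos_of_lt (Finset.mem_range.mp hk))]
  rw [differenceQuotient_X_pow, differenceQuotient_X_pow, sum_range_succ, Nat.add_sub_cancel,
    Nat.sub_self, shift, pow_zero, smul_eq_C_mul, mul_one]

theorem differenceQuotient_X_mul (u : ℕ → R) (p : R[X]) :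
    differenceQuotient u (X * p) = X * differenceQuotient u p + C (momentFunctional u p) := by
  induction p using Polynomial.induction_on' with
  | add p q hp hq =>
    simp only [mul_add, map_add, hp, hq]
    ring
  | monomial n c =>
    rw [← smul_X_eq_monomial, mul_smul_comm, ← pow_succ', map_smul, map_smul, map_smul,
      differenceQuotient_X_pow_succ, momentFunctional_X_pow, smul_add, mul_smul_comm, smul_eq_mul,
      C_mul, ← smul_eq_C_mul]

theorem momentFunctional_differenceQuotient {u w : ℕ → R}
    (huw : ∀ n, ∑ k ∈ range (n + 2), u k * w (n + 1 - k) = 0) (p : R[X]) :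
    momentFunctional (fun n => w (n + 2)) (differenceQuotient u p) =
      -(w 0 * momentFunctional u (X * p) + w 1 * momentFunctional u p) := by
  induction p using Polynomial.induction_on' with
  | add p q hp hq =>
    simp only [mul_add, map_add, hp, hq]
    ring
  | monomial n c =>
    have reindex : ∑ k ∈ range n, u k * w (n - 1 - k + 2) = ∑ k ∈ range n, u k * w (n + 1 - k) :=
      Finset.sum_congr rfl fun k hk => by
        have := Finset.mem_range.mp hk
        congr 2
        omega
    have convolution := huw n
    rw [sum_range_succ, sum_range_succ, Nat.add_sub_cancel_left, Nat.sub_self] at convolution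
    rw [← smul_X_eq_monomial, mul_smul_comm, ← pow_succ']
    simp only [map_smul, map_sum, differenceQuotient_X_pow, momentFunctional_X_pow, smul_eq_mul,
      reindex]
    linear_combination c * convolution

end

/-- The recurrence `x P_n = P_{n+1} + b_n P_n + a_n P_{n-1}` with `P_{-1} = 0` and `P_0 = 1`, over
any commutative ring; over `ℂ` it is `HasTTRR`. -/
structure ThreeTermRecurrence {R : Type*} [CommRing R] (P : ℕ → R[X]) (a b : ℕ → R) : Prop where
  zero : P 0 = 1
  X_mul_zero : X * P 0 = P 1 + b 0 • P 0
  X_mul_succ (n : ℕ) : X * P (n + 1) = P (n + 2) + b (n + 1) • P (n + 1) + a (n + 1) • P n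

namespace ThreeTermRecurrence

variable {R : Type*} [CommRing R] {P Q : ℕ → R[X]} {a b : ℕ → R} {u v w : ℕ → R}

theorem linearMap_ext {M : Type*} [AddCommMonoid M] [Module R M] (hP : ThreeTermRecurrence P a b)
    {f g : R[X] →ₗ[R] M} (hfg : ∀ n, f (P n) = g (P n)) : f = g := by
  have agree (k : ℕ) : ∀ n, f (X ^ k * P n) = g (X ^ k * P n) := by
    induction k with
    | zero => simpa using hfg
    | succ k ih =>
      rintro (_ | n)
      · simp only [pow_succ, mul_assoc, hP.X_mul_zero, mul_add, mul_smul_comm, map_add, map_smul,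
          ih]
      · simp only [pow_succ, mul_assoc, hP.X_mul_succ, mul_add, mul_smul_comm, map_add, map_smul,
          ih]
  ext k
  simpa [hP.zero, monomial_one_right_eq_X_pow] using agree k 0

theorem moments_proportional (hP : ThreeTermRecurrence P a b)
    (hv : ∀ n, momentFunctional v (P (n + 1)) = 0)
    (hw : ∀ n, momentFunctional w (P (n + 1)) = 0) (n : ℕ) : w 0 * v n = v 0 * w n := by
  have proportional : w 0 • momentFunctional v = v 0 • momentFunctional w := by
    refine hP.linearMap_ext ?_
    rintro (_ | n)
    · simp [hP.zero, momentFunctional_one, mul_comm]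
    · simp [hv, hw]
  simpa [momentFunctional_X_pow] using LinearMap.congr_fun proportional (X ^ n)

theorem momentFunctional_X_mul_apply_one (hP : ThreeTermRecurrence P a b)
    (hu : ∀ n, momentFunctional u (P (n + 1)) = 0) :
    momentFunctional u (X * P 1) = a 1 * u 0 := by
  simp [hP.X_mul_succ, hP.zero, hu, momentFunctional_one]

theorem momentFunctional_X_mul_apply_add_two (hP : ThreeTermRecurrence P a b)
    (hu : ∀ n, momentFunctional u (P (n + 1)) = 0) (n : ℕ) :
    momentFunctional u (X * P (n + 2)) = 0 := by
  simp [hP.X_mul_succ, hu]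

theorem differenceQuotient_apply_one (hP : ThreeTermRecurrence P a b) (u : ℕ → R) :
    differenceQuotient u (P 1) = C (u 0) := by
  have step := differenceQuotient_X_mul u 1
  rw [← hP.zero, hP.X_mul_zero, map_add, map_smul, hP.zero, differenceQuotient_one,
    momentFunctional_one] at step
  simpa using step

theorem differenceQuotient_apply_add_two (hP : ThreeTermRecurrence P a b)
    (hu : ∀ n, momentFunctional u (P (n + 1)) = 0) (n : ℕ) :
    differenceQuotient u (P (n + 2)) =
      X * differenceQuotient u (P (n + 1)) - b (n + 1) • differenceQuotient u (P (n + 1))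
        - a (n + 1) • differenceQuotient u (P n) := by
  have recurrence := congrArg (differenceQuotient u) (hP.X_mul_succ n)
  simp only [differenceQuotient_X_mul, hu, C_0, map_add, map_smul] at recurrence
  linear_combination -recurrence

theorem differenceQuotient_apply_succ (hP : ThreeTermRecurrence P a b)
    (hQ : ThreeTermRecurrence Q (fun n => a (n + 1)) (fun n => b (n + 1)))
    (hu : ∀ n, momentFunctional u (P (n + 1)) = 0) (n : ℕ) :
    differenceQuotient u (P (n + 1)) = u 0 • Q n := by
  induction n using Nat.twoStepInduction with
  | zero => rw [hP.differenceQuotient_apply_one, hQ.zero, smul_eq_C_mul, mul_one]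
  | one =>
    rw [hP.differenceQuotient_apply_add_two hu, hP.differenceQuotient_apply_one, hP.zero,
      differenceQuotient_one, eq_sub_of_add_eq hQ.X_mul_zero.symm, hQ.zero]
    simp only [smul_eq_C_mul]
    ring
  | more n ih ih' =>
    have recurrence := hQ.X_mul_succ n
    rw [hP.differenceQuotient_apply_add_two hu, ih, ih']
    simp only [smul_eq_C_mul] at recurrence ⊢
    linear_combination C (u 0) * recurrence

end ThreeTermRecurrence

theorem stmt_5_general {R : Type*} [CommRing R] {P P1 : ℕ → R[X]} {a b u u1 uinv : ℕ → R}
    (hP : ThreeTermRecurrence P a b)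
    (hP1 : ThreeTermRecurrence P1 (fun n => a (n + 1)) (fun n => b (n + 1)))
    (hu : ∀ n, momentFunctional u (P (n + 1)) = 0)
    (hu1 : ∀ n, momentFunctional u1 (P1 (n + 1)) = 0)
    (hinv : ∀ n, ∑ k ∈ range (n + 1), u k * uinv (n - k) = if n = 0 then 1 else 0) (n : ℕ) :
    a 1 * u1 n = -(u1 0 * u 0) * uinv (n + 2) := by
  set v : ℕ → R := fun n => uinv (n + 2)
  have inv_zero : u 0 * uinv 0 = 1 := by simpa using hinv 0
  have pairing (n : ℕ) :
      u 0 * momentFunctional v (P1 n) = -(uinv 0 * momentFunctional u (X * P (n + 1))) := by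
    rw [← smul_eq_mul, ← map_smul, ← hP.differenceQuotient_apply_succ hP1 hu,
      momentFunctional_differenceQuotient fun n => by simpa using hinv (n + 1), hu, mul_zero,
      add_zero]
  have annihilates (n : ℕ) : momentFunctional v (P1 (n + 1)) = 0 := by
    have vanishing := pairing (n + 1)
    rw [hP.momentFunctional_X_mul_apply_add_two hu] at vanishing
    linear_combination uinv 0 * vanishing - momentFunctional v (P1 (n + 1)) * inv_zero
  have normalization : u 0 * v 0 = -a 1 := by
    have leading := pairing 0
    rw [hP1.zero, momentFunctional_one, hP.momentFunctional_X_mul_apply_one hu] at leading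
    linear_combination leading - a 1 * inv_zero
  linear_combination
    u1 n * normalization - u 0 * hP1.moments_proportional hu1 annihilates n

theorem HasTTRR.threeTermRecurrence {P : ℕ → ℂ[X]} {a b : ℕ → ℂ} (hP : HasTTRR P a b) :
    ThreeTermRecurrence P a b where
  zero := hP.1
  X_mul_zero := by simpa only [smul_eq_C_mul] using hP.2.1
  X_mul_succ n := by simpa only [smul_eq_C_mul, Nat.add_sub_cancel] using hP.2.2 (n + 1) n.succ_pos

theorem IsSMOP.zero {u : ℕ → ℂ} {P : ℕ → ℂ[X]} (hP : IsSMOP u P) : P 0 = 1 :=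
  eq_one_of_monic_natDegree_zero (hP.1 0) (hP.2.1 0)

theorem IsSMOP.momentFunctional_apply_succ {u : ℕ → ℂ} {P : ℕ → ℂ[X]} (hP : IsSMOP u P) (n : ℕ) :
    momentFunctional u (P (n + 1)) = 0 := by
  have orthogonal : momentFunctional u (P (n + 1) * P 0) = 0 := hP.2.2.1 (n + 1) 0 n.succ_ne_zero
  rwa [hP.zero, mul_one] at orthogonal

/-- `u^{(1)} = -(u^{(1)}_0 u_0 / a_1) x² u⁻¹` on the level of moments. -/
theorem stmt_5 (u : ℕ → ℂ) (P : ℕ → Polynomial ℂ) (hP : IsSMOP u P)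
    (a b : ℕ → ℂ) (hrec : HasTTRR P a b) (ha : ∀ n, 1 ≤ n → a n ≠ 0)
    (P1 : ℕ → Polynomial ℂ)
    (hP1 : HasTTRR P1 (fun n => a (n + 1)) (fun n => b (n + 1)))
    (u1 : ℕ → ℂ) (hu1 : IsSMOP u1 P1)
    (uinv : ℕ → ℂ) (hinv : IsInverseMoments u uinv) :
    ∀ n, u1 n = -(u1 0 * u 0 / a 1) * uinv (n + 2) := by
  intro n
  field_simp [ha 1 le_rfl]
  linear_combination stmt_5_general hrec.threeTermRecurrence hP1.threeTermRecurrence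
    hP.momentFunctional_apply_succ hu1.momentFunctional_apply_succ hinv n
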